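/- arXiv:math/0509720 — 2 statements merged into one kernel-verified Lean document; each statement's English description precedes it below -/
import Mathlib

section
/- Fix n ≥ 1, t > 0 and (x',y') ∈ ℝ^{n+1}×ℝ^n. If (x,y) ∈ ℝ^{n+1}×ℝ^n satisfies x_{i+1} = y_i for some i ∈ {1,…,n}, then the partial derivative ∂/∂x_{i+1} of the function x ↦ q^n_t((x,y),(x',y')) vanishes at that point: ∂q^n_t/∂x_{i+1}((x,y),(x',y')) = 0. -/
open MeasureTheory Real

/-- The centered Gaussian density with variance `t`. -/
noncomputable def gauss (t y : ℝ) : ℝ :=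
  (Real.sqrt (2 * Real.pi * t))⁻¹ * Real.exp (-y ^ 2 / (2 * t))

/-- The Gaussian cumulative distribution function `Φ_t`. -/
noncomputable def gaussCDF (t y : ℝ) : ℝ := ∫ z in Set.Iic y, gauss t z

/-- The derivative `φ'_t` of the Gaussian density. -/
noncomputable def gaussDeriv (t y : ℝ) : ℝ :=
  -y / Real.sqrt (2 * Real.pi * t ^ 3) * Real.exp (-y ^ 2 / (2 * t))

/-- The kernel `q^n_t((x,y),(x',y'))`, a `(2n+1)×(2n+1)` block determinant. -/
noncomputable def qKer (n : ℕ) (t : ℝ) (x x' : Fin (n + 1) → ℝ) (y y' : Fin n → ℝ) : ℝ :=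
  Matrix.det (Matrix.fromBlocks
    (Matrix.of fun i j : Fin (n + 1) => gauss t (x' j - x i))
    (Matrix.of fun (i : Fin (n + 1)) (j : Fin n) =>
      gaussCDF t (y' j - x i) - (if (i : ℕ) ≤ (j : ℕ) then (1 : ℝ) else 0))
    (Matrix.of fun (i : Fin n) (j : Fin (n + 1)) => gaussDeriv t (x' j - y i))
    (Matrix.of fun i j : Fin n => gauss t (y' j - y i)))

theorem hasDerivAt_gauss_aux (t : ℝ) (ht : 0 < t) (y : ℝ) :
    HasDerivAt (gauss t) (gaussDeriv t y) y := by
  have h1 : HasDerivAt (fun y : ℝ => -y ^ 2 / (2 * t)) (-(2 * y) / (2 * t)) y := by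
    have := ((hasDerivAt_pow 2 y).neg).div_const (2 * t)
    simpa using this
  have h2 := (h1.exp).const_mul ((Real.sqrt (2 * Real.pi * t))⁻¹)
  have hs : Real.sqrt (2 * Real.pi * t ^ 3) = t * Real.sqrt (2 * Real.pi * t) := by
    rw [show 2 * Real.pi * t ^ 3 = t ^ 2 * (2 * Real.pi * t) by ring,
      Real.sqrt_mul (by positivity), Real.sqrt_sq ht.le]
  have hp : 0 < Real.sqrt (2 * Real.pi * t) := Real.sqrt_pos.2 (by positivity)
  have : gaussDeriv t y = (Real.sqrt (2 * Real.pi * t))⁻¹ *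
      (Real.exp (-y ^ 2 / (2 * t)) * (-(2 * y) / (2 * t))) := by
    unfold gaussDeriv
    rw [hs]
    field_simp
  rw [this]
  exact h2

theorem continuous_gauss_aux (t : ℝ) : Continuous (gauss t) := by
  unfold gauss
  fun_prop

theorem integrable_gauss_aux (t : ℝ) (ht : 0 < t) : Integrable (gauss t) := by
  have h := (integrable_exp_neg_mul_sq (b := 1 / (2 * t)) (by positivity)).const_mul
    ((Real.sqrt (2 * Real.pi * t))⁻¹)
  refine h.congr (Filter.Eventually.of_forall fun z => ?_)
  simp only [gauss]
  congr 2
  ring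

theorem hasDerivAt_gaussCDF_aux (t : ℝ) (ht : 0 < t) (y : ℝ) :
    HasDerivAt (gaussCDF t) (gauss t y) y := by
  have hint := integrable_gauss_aux t ht
  have h : gaussCDF t = fun y => (∫ z in (0:ℝ)..y, gauss t z) + gaussCDF t 0 := by
    funext y
    have := intervalIntegral.integral_Iic_sub_Iic (a := 0) (b := y) (f := gauss t)
      (μ := volume) hint.integrableOn hint.integrableOn
    simp only [gaussCDF]
    linarith
  rw [h]
  exact (intervalIntegral.integral_hasDerivAt_right
    (hint.intervalIntegrable) ((continuous_gauss_aux t).stronglyMeasurableAtFilter _ _)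
    (continuous_gauss_aux t).continuousAt).add_const _

theorem hasDerivAt_det_updateRow_aux {m : Type*} [Fintype m] [DecidableEq m]
    (M : Matrix m m ℝ) (r s : m) (hrs : r ≠ s) (v : ℝ → m → ℝ) (a : ℝ)
    (hv : ∀ k, HasDerivAt (fun b => v b k) (-(M s k)) a) :
    HasDerivAt (fun b => (M.updateRow r (v b)).det) 0 a := by
  let L : (m → ℝ) →ₗ[ℝ] ℝ :=
    { toFun := fun w => (M.updateRow r w).det
      map_add' := fun u w => Matrix.det_updateRow_add M r u w
      map_smul' := fun c w => by simpa using Matrix.det_updateRow_smul M r c w }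
  have h1 : HasDerivAt v (fun k => -(M s k)) a := hasDerivAt_pi.2 hv
  have h2 := (LinearMap.toContinuousLinearMap L).hasFDerivAt.comp_hasDerivAt a h1
  have h3 : L (fun k => -(M s k)) = 0 := by
    have e : (fun k => -(M s k)) = (-1 : ℝ) • M s := by ext k; simp
    rw [e, L.map_smul]
    have : L (M s) = 0 := Matrix.det_zero_of_row_eq hrs (by
      rw [Matrix.updateRow_self, Matrix.updateRow_ne hrs.symm])
    rw [this, smul_zero]
  have h4 : (LinearMap.toContinuousLinearMap L) (fun k => -(M s k)) = 0 := h3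
  rw [h4] at h2
  exact h2

/-- If `x_{i+1} = y_i`, then `∂q^n_t/∂x_{i+1}((x,y),(x',y')) = 0`. -/
theorem stmt3 (n : ℕ) (hn : 1 ≤ n) (t : ℝ) (ht : 0 < t)
    (x x' : Fin (n + 1) → ℝ) (y y' : Fin n → ℝ)
    (i : ℕ) (hi : i < n) (hxy : x ⟨i + 1, by omega⟩ = y ⟨i, hi⟩) :
    deriv (fun a => qKer n t (Function.update x ⟨i + 1, by omega⟩ a) x' y y')
      (x ⟨i + 1, by omega⟩) = 0 := by
  have hi' : i + 1 < n + 1 := by omega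
  set r : Fin (n + 1) := ⟨i + 1, hi'⟩ with hr
  set s : Fin n := ⟨i, hi⟩ with hs
  let M := Matrix.fromBlocks
    (Matrix.of fun i j : Fin (n + 1) => gauss t (x' j - x i))
    (Matrix.of fun (i : Fin (n + 1)) (j : Fin n) =>
      gaussCDF t (y' j - x i) - (if (i : ℕ) ≤ (j : ℕ) then (1 : ℝ) else 0))
    (Matrix.of fun (i : Fin n) (j : Fin (n + 1)) => gaussDeriv t (x' j - y i))
    (Matrix.of fun i j : Fin n => gauss t (y' j - y i))
  let v : ℝ → (Fin (n + 1) ⊕ Fin n) → ℝ := fun a => Sum.elim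
    (fun j => gauss t (x' j - a))
    (fun j => gaussCDF t (y' j - a) - (if (r : ℕ) ≤ (j : ℕ) then (1 : ℝ) else 0))
  have key : (fun a => qKer n t (Function.update x r a) x' y y') =
      fun a => (M.updateRow (Sum.inl r) (v a)).det := by
    funext a
    unfold qKer
    congr 1
    ext p q
    rcases p with p | p
    · by_cases hp : p = r
      · subst hp
        rcases q with q | q <;> simp [v]
      · rcases q with q | q <;> simp [M, Matrix.updateRow_apply, hp]
    · rcases q with q | q <;> simp [M, Matrix.updateRow_apply]
  rw [key]
  refine (hasDerivAt_det_updateRow_aux M (Sum.inl r) (Sum.inr s) (by simp) v _ ?_).deriv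
  rintro (j | j)
  · have h := (hasDerivAt_gauss_aux t ht (x' j - x r)).comp (x r)
      ((hasDerivAt_id (x r)).const_sub (x' j))
    simpa [v, M, hxy, Function.comp_def] using h
  · have h := ((hasDerivAt_gaussCDF_aux t ht (y' j - x r)).comp (x r)
      ((hasDerivAt_id (x r)).const_sub (y' j))).sub_const
        (if (r : ℕ) ≤ (j : ℕ) then (1 : ℝ) else 0)
    simpa [v, M, hxy, Function.comp_def] using h
end

section
/- Fix n ≥ 1 and x' ∈ ℝ^n. The function (t,x) ↦ r_t(x,x') is smooth on (0,∞)×ℝ^n and satisfies the heat equation (1/2) Σ_{i=1}^n ∂²r_t/∂x_i²(x,x') = ∂r_t/∂t(x,x'); moreover, for any i ∈ {2,…,n}, at every point with x_i = x_{i−1} the partial derivative ∂r_t/∂x_i(x,x') vanishes. -/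
open MeasureTheory Real

/-- `Φ^{(m)}_t` for `m : ℤ`: for `m ≥ 1` the `m`-th iterated integral of the Gaussian
density `φ_t`, for `m = 0` the density itself, and for `m ≤ −1` the `(−m)`-th derivative
of `φ_t`. -/
noncomputable def PhiIter (t : ℝ) (m : ℤ) (y : ℝ) : ℝ :=
  if 1 ≤ m then
    ∫ x in Set.Iic y, ((y - x) ^ (m - 1).toNat / (Nat.factorial (m - 1).toNat : ℝ)) * gauss t x
  else iteratedDeriv (-m).toNat (fun z => gauss t z) y

/-- The kernel `r_t(x,x') = det{Φ^{(i−j)}_t(x'_j − x_i)}`. -/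
noncomputable def rKer (n : ℕ) (t : ℝ) (x x' : Fin n → ℝ) : ℝ :=
  Matrix.det (Matrix.of fun i j : Fin n => PhiIter t ((i : ℤ) - (j : ℤ)) (x' j - x i))


open Filter Topology

lemma gauss_hasDerivAt {t : ℝ} (ht : 0 < t) (y : ℝ) :
    HasDerivAt (fun z => gauss t z) (-(y / t) * gauss t y) y := by
  unfold gauss
  have h1 : HasDerivAt (fun z : ℝ => -z ^ 2 / (2 * t)) (-(2 * y) / (2 * t)) y := by
    have := ((hasDerivAt_pow 2 y).neg).div_const (2 * t)
    simpa using this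
  have h2 := (h1.exp).const_mul (Real.sqrt (2 * Real.pi * t))⁻¹
  refine h2.congr_deriv ?_
  field_simp

lemma gauss_hasDerivAt_t {t : ℝ} (ht : 0 < t) (y : ℝ) :
    HasDerivAt (fun s => gauss s y) ((y ^ 2 / (2 * t ^ 2) - 1 / (2 * t)) * gauss t y) t := by
  unfold gauss
  have hp : 0 < 2 * Real.pi * t := by positivity
  have h0 : HasDerivAt (fun s : ℝ => 2 * Real.pi * s) (2 * Real.pi) t := by
    simpa using (hasDerivAt_id t).const_mul (2 * Real.pi)
  have hs := (h0.sqrt hp.ne').inv (Real.sqrt_pos.2 hp).ne'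
  have h1 : HasDerivAt (fun s : ℝ => -y ^ 2 / (2 * s)) (y ^ 2 / (2 * t ^ 2)) t := by
    have h2 : HasDerivAt (fun s : ℝ => 2 * s) 2 t := by
      simpa using (hasDerivAt_id t).const_mul (2 : ℝ)
    have := (hasDerivAt_const t (-y ^ 2)).div h2 (by positivity)
    refine this.congr_deriv ?_
    field_simp
    ring
  have h2 := hs.mul h1.exp
  refine h2.congr_deriv ?_
  have hq : Real.sqrt (2 * Real.pi * t) ^ 2 = 2 * Real.pi * t := Real.sq_sqrt hp.le
  have hq0 := (Real.sqrt_pos.2 hp).ne'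
  simp only [Pi.inv_apply]
  rw [hq]
  set S := Real.sqrt (2 * Real.pi * t)
  field_simp
  ring

lemma gauss_contDiffOn :
    ContDiffOn ℝ (⊤ : ℕ∞) (fun p : ℝ × ℝ => gauss p.1 p.2) {p : ℝ × ℝ | 0 < p.1} := by
  unfold gauss
  intro p hp
  have hp' : 0 < p.1 := hp
  have h0 : 2 * Real.pi * p.1 ≠ 0 := by positivity
  apply ContDiffAt.contDiffWithinAt
  refine ContDiffAt.mul (ContDiffAt.inv (ContDiffAt.sqrt (by fun_prop) h0) ?_) ?_
  · exact (Real.sqrt_pos.2 (by positivity)).ne'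
  · refine ContDiffAt.exp (ContDiffAt.div (by fun_prop) (by fun_prop) (by positivity))

lemma gauss_contDiff {t : ℝ} : ContDiff ℝ (⊤ : ℕ∞) (fun z : ℝ => gauss t z) := by
  unfold gauss
  fun_prop

lemma phi_zero (t y : ℝ) : PhiIter t 0 y = gauss t y := by
  simp [PhiIter]

lemma phi_pos (t y : ℝ) (k : ℕ) : PhiIter t ((k : ℤ) + 1) y =
    ∫ x in Set.Iic y, ((y - x) ^ k / (Nat.factorial k : ℝ)) * gauss t x := by
  unfold PhiIter
  rw [if_pos (by omega)]
  have : ((k : ℤ) + 1 - 1).toNat = k := by omega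
  rw [this]

lemma phi_neg (t y : ℝ) (k : ℕ) : PhiIter t (-(k : ℤ)) y =
    iteratedDeriv k (fun z => gauss t z) y := by
  unfold PhiIter
  rw [if_neg (by omega)]
  have : (-(-(k : ℤ))).toNat = k := by omega
  rw [this]

lemma phi_neg_deriv (t y : ℝ) (k : ℕ) :
    HasDerivAt (fun z => PhiIter t (-(k : ℤ)) z) (PhiIter t (-(k : ℤ) - 1) y) y := by
  have e : -(k : ℤ) - 1 = -((k + 1 : ℕ) : ℤ) := by push_cast; ring
  rw [e]
  simp only [phi_neg]
  rw [iteratedDeriv_succ]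
  have := (gauss_contDiff (t := t)).differentiable_iteratedDeriv k (by exact_mod_cast WithTop.coe_lt_top _)
  exact (this y).hasDerivAt

lemma phi_rec_neg {t : ℝ} (ht : 0 < t) (k : ℕ) : ∀ y,
    ((-(k : ℤ) : ℤ) : ℝ) * PhiIter t (-(k : ℤ) + 1) y
      = y * PhiIter t (-(k : ℤ)) y + t * PhiIter t (-(k : ℤ) - 1) y := by
  induction k with
  | zero =>
    intro y
    have h1 := phi_neg_deriv t y 0
    simp only [Nat.cast_zero, neg_zero, phi_zero] at h1 ⊢
    rw [h1.unique (gauss_hasDerivAt ht y)]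
    field_simp
    simp
  | succ k ih =>
    intro y
    have e1 : -((k + 1 : ℕ) : ℤ) + 1 = -(k : ℤ) := by push_cast; ring
    have e2 : -(k : ℤ) - 1 = -((k + 1 : ℕ) : ℤ) := by push_cast; ring
    have hk := phi_neg_deriv t y k
    have hk1 := phi_neg_deriv t y (k + 1)
    rw [e1]
    rw [e2] at hk
    have hR : HasDerivAt (fun z => z * PhiIter t (-(k : ℤ)) z + t * PhiIter t (-((k + 1 : ℕ) : ℤ)) z)
        (1 * PhiIter t (-(k : ℤ)) y + y * PhiIter t (-((k + 1 : ℕ) : ℤ)) y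
          + t * PhiIter t (-((k + 1 : ℕ) : ℤ) - 1) y) y :=
      ((hasDerivAt_id y).mul hk).add (hk1.const_mul t)
    have hL : HasDerivAt (fun z => ((-(k : ℤ) : ℤ) : ℝ) * PhiIter t (-(k : ℤ) + 1) z)
        (((-(k : ℤ) : ℤ) : ℝ) * PhiIter t (-(k : ℤ)) y) y := by
      rcases k with _ | k
      · simpa using hasDerivAt_const y (0 : ℝ)
      · have e3 : -((k + 1 : ℕ) : ℤ) + 1 = -(k : ℤ) := by push_cast; ring
        have e4 : -(k : ℤ) - 1 = -((k + 1 : ℕ) : ℤ) := by push_cast; ring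
        have := phi_neg_deriv t y k
        rw [e4] at this
        rw [e3]
        exact this.const_mul _
    have hfun : (fun z => ((-(k : ℤ) : ℤ) : ℝ) * PhiIter t (-(k : ℤ) + 1) z) =
        (fun z => z * PhiIter t (-(k : ℤ)) z + t * PhiIter t (-((k + 1 : ℕ) : ℤ)) z) := by
      funext z; rw [ih z, e2]
    rw [hfun] at hL
    have := hL.unique hR
    push_cast at this ⊢
    linarith

lemma gauss_int {t : ℝ} (ht : 0 < t) (y : ℝ) (k : ℕ) : ∀ j : ℕ,
    Integrable (fun x : ℝ => x ^ j * (y - x) ^ k * gauss t x) := by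
  induction k with
  | zero =>
    intro j
    have h := (integrable_rpow_mul_exp_neg_mul_sq (b := 1 / (2 * t)) (by positivity)
      (s := (j : ℝ)) (by have : (0:ℝ) ≤ j := Nat.cast_nonneg j
                         linarith)).const_mul (Real.sqrt (2 * Real.pi * t))⁻¹
    refine h.congr (Eventually.of_forall fun x => ?_)
    simp only [gauss, Real.rpow_natCast, pow_zero]
    have : -(1 / (2 * t)) * x ^ 2 = -x ^ 2 / (2 * t) := by ring
    rw [this]; ring
  | succ k ih =>
    intro j
    refine (((ih j).const_mul y).sub (ih (j + 1))).congr (Eventually.of_forall fun x => ?_)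
    simp only [Pi.sub_apply]
    ring

lemma phi_rec_pos {t : ℝ} (ht : 0 < t) (k : ℕ) (y : ℝ) :
    ((k : ℝ) + 1) * PhiIter t ((k : ℤ) + 1 + 1) y
      = y * PhiIter t ((k : ℤ) + 1) y + t * PhiIter t (k : ℤ) y := by
  have I0 : ∀ k : ℕ, Integrable (fun x : ℝ => (y - x) ^ k / (Nat.factorial k : ℝ) * gauss t x) := by
    intro k
    refine ((gauss_int ht y k 0).const_mul (1 / (Nat.factorial k : ℝ))).congr
      (Eventually.of_forall fun x => ?_)
    simp only; ring
  have I1 : ∀ k : ℕ, Integrable (fun x : ℝ => x * ((y - x) ^ k / (Nat.factorial k : ℝ) * gauss t x)) := by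
    intro k
    refine ((gauss_int ht y k 1).const_mul (1 / (Nat.factorial k : ℝ))).congr
      (Eventually.of_forall fun x => ?_)
    simp only; ring
  have e : (k : ℤ) + 1 + 1 = ((k + 1 : ℕ) : ℤ) + 1 := by push_cast; ring
  rw [e, phi_pos, phi_pos]
  have hL : ((k : ℝ) + 1) * (∫ x in Set.Iic y, ((y - x) ^ (k + 1) / (Nat.factorial (k + 1) : ℝ)) * gauss t x)
      = y * (∫ x in Set.Iic y, ((y - x) ^ k / (Nat.factorial k : ℝ)) * gauss t x)
        - ∫ x in Set.Iic y, x * ((y - x) ^ k / (Nat.factorial k : ℝ) * gauss t x) := by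
    rw [← integral_const_mul, ← integral_const_mul,
      ← integral_sub ((I0 k).const_mul y).integrableOn (I1 k).integrableOn]
    congr 1
    funext x
    have : (Nat.factorial k : ℝ) ≠ 0 := by positivity
    rw [Nat.factorial_succ]
    push_cast
    field_simp
    ring
  rw [hL]
  have key : ∫ x in Set.Iic y, x * ((y - x) ^ k / (Nat.factorial k : ℝ) * gauss t x)
      = - (t * PhiIter t (k : ℤ) y) := by
    rcases k with _ | k
    · have hd : ∀ x : ℝ, HasDerivAt (fun z => -(t * gauss t z)) (x * gauss t x) x := by
        intro x
        refine ((gauss_hasDerivAt ht x).const_mul t).neg.congr_deriv ?_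
        field_simp
      have i1 : Integrable (fun x : ℝ => x * gauss t x) := by simpa using I1 0
      have i0 : Integrable (fun x : ℝ => -(t * gauss t x)) := by
        simpa using ((I0 0).const_mul t).neg
      have hlim := tendsto_zero_of_hasDerivAt_of_integrableOn_Iic (a := y)
        (fun x _ => hd x) i1.integrableOn i0.integrableOn
      have := integral_Iic_of_hasDerivAt_of_tendsto (a := y)
        (hd y).continuousAt.continuousWithinAt (fun x _ => hd x) i1.integrableOn hlim
      simpa [phi_zero] using this
    · have hd : ∀ x : ℝ, HasDerivAt
          (fun z => -t * ((y - z) ^ (k + 1) / (Nat.factorial (k + 1) : ℝ) * gauss t z))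
          (x * ((y - x) ^ (k + 1) / (Nat.factorial (k + 1) : ℝ) * gauss t x) +
            t * ((y - x) ^ k / (Nat.factorial k : ℝ) * gauss t x)) x := by
        intro x
        have h1 : HasDerivAt (fun z : ℝ => (y - z) ^ (k + 1)) (((k + 1 : ℕ) : ℝ) * (y - x) ^ k * (-1)) x := by
          simpa using ((hasDerivAt_id x).const_sub y).fun_pow (k + 1)
        refine (((h1.div_const _).mul (gauss_hasDerivAt ht x)).const_mul (-t)).congr_deriv ?_
        have : (Nat.factorial k : ℝ) ≠ 0 := by positivity
        rw [Nat.factorial_succ]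
        push_cast
        field_simp
        ring
      have i0 := (I0 (k + 1)).const_mul (-t)
      have i1 := (I1 (k + 1)).add ((I0 k).const_mul t)
      have hlim := tendsto_zero_of_hasDerivAt_of_integrableOn_Iic (a := y)
        (fun x _ => hd x) i1.integrableOn i0.integrableOn
      have := integral_Iic_of_hasDerivAt_of_tendsto (a := y)
        (hd y).continuousAt.continuousWithinAt (fun x _ => hd x) i1.integrableOn hlim
      rw [integral_add (I1 (k + 1)).integrableOn ((I0 k).const_mul t).integrableOn,
        integral_const_mul, ← phi_pos] at this
      push_cast
      simp at this
      linarith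
  rw [key]
  ring

lemma phi_rec {t : ℝ} (ht : 0 < t) (m : ℤ) (y : ℝ) :
    (m : ℝ) * PhiIter t (m + 1) y = y * PhiIter t m y + t * PhiIter t (m - 1) y := by
  rcases le_or_gt m 0 with h | h
  · obtain ⟨k, rfl⟩ : ∃ k : ℕ, m = -(k : ℤ) := ⟨(-m).toNat, by omega⟩
    exact phi_rec_neg ht k y
  · obtain ⟨k, rfl⟩ : ∃ k : ℕ, m = (k : ℤ) + 1 := ⟨(m - 1).toNat, by omega⟩
    have := phi_rec_pos ht k y
    push_cast
    rw [this]
    congr 3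
    ring

lemma gauss_scale {t : ℝ} (ht : 0 < t) (y : ℝ) :
    gauss t y = (Real.sqrt t)⁻¹ * gauss 1 ((Real.sqrt t)⁻¹ * y) := by
  unfold gauss
  have h1 : Real.sqrt (2 * Real.pi * t) = Real.sqrt (2 * Real.pi) * Real.sqrt t :=
    Real.sqrt_mul (by positivity) t
  have h2 : -((Real.sqrt t)⁻¹ * y) ^ 2 / (2 * 1) = -y ^ 2 / (2 * t) := by
    rw [mul_pow, inv_pow, Real.sq_sqrt ht.le]
    field_simp
  rw [h1, h2, mul_one, mul_inv]
  ring

lemma gauss_even (t y : ℝ) : gauss t (-y) = gauss t y := by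
  unfold gauss
  simp

lemma phi_one (t y : ℝ) : PhiIter t 1 y = ∫ x in Set.Iic y, gauss t x := by
  have := phi_pos t y 0
  simpa using this

lemma phi_one_Ioi (t y : ℝ) : PhiIter t 1 y = ∫ x in Set.Ioi (-y), gauss t x := by
  rw [phi_one, ← integral_comp_neg_Iic]
  simp [gauss_even]

lemma phi_one_scale {t : ℝ} (ht : 0 < t) (y : ℝ) :
    PhiIter t 1 y = PhiIter 1 1 ((Real.sqrt t)⁻¹ * y) := by
  have hs : 0 < (Real.sqrt t)⁻¹ := by positivity
  rw [phi_one_Ioi, phi_one_Ioi]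
  have h : ∀ x, gauss t x = (Real.sqrt t)⁻¹ * gauss 1 ((Real.sqrt t)⁻¹ * x) := gauss_scale ht
  simp_rw [h]
  rw [integral_const_mul, integral_comp_mul_left_Ioi (fun x => gauss 1 x) (-y) hs, smul_eq_mul,
    mul_inv_cancel_left₀ hs.ne', mul_neg]

lemma gauss_integrable {t : ℝ} (ht : 0 < t) : Integrable (fun x => gauss t x) := by
  simpa using gauss_int ht 0 0 0

lemma phi_one_hasDerivAt {t : ℝ} (ht : 0 < t) (y : ℝ) :
    HasDerivAt (fun z => PhiIter t 1 z) (gauss t y) y := by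
  have h : ∀ z, PhiIter t 1 z = (∫ x in Set.Iic (0:ℝ), gauss t x) + ∫ x in (0:ℝ)..z, gauss t x := by
    intro z
    rw [phi_one, ← intervalIntegral.integral_Iic_sub_Iic
      (gauss_integrable ht).integrableOn (gauss_integrable ht).integrableOn]
    ring
  simp_rw [h]
  have hc : Continuous (fun x => gauss t x) := gauss_contDiff.continuous
  exact (intervalIntegral.integral_hasDerivAt_right (hc.intervalIntegrable _ _)
    (hc.stronglyMeasurableAtFilter _ _) hc.continuousAt).const_add _

lemma phi_one_contDiff : ContDiff ℝ (⊤ : ℕ∞) (fun z => PhiIter 1 1 z) := by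
  rw [contDiff_infty_iff_deriv]
  refine ⟨fun y => (phi_one_hasDerivAt one_pos y).differentiableAt, ?_⟩
  have : deriv (fun z => PhiIter 1 1 z) = fun z => gauss 1 z :=
    funext fun y => (phi_one_hasDerivAt one_pos y).deriv
  rw [this]
  exact gauss_contDiff

lemma phi_one_hasDerivAt_t {t : ℝ} (ht : 0 < t) (y : ℝ) :
    HasDerivAt (fun s => PhiIter s 1 y) (1 / 2 * (-(y / t) * gauss t y)) t := by
  have hs := (Real.sqrt_pos.2 ht).ne'
  have h1 : HasDerivAt (fun s => (Real.sqrt s)⁻¹ * y)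
      (-(1 / (2 * Real.sqrt t)) / Real.sqrt t ^ 2 * y) t :=
    ((Real.hasDerivAt_sqrt ht.ne').inv hs).mul_const y
  have h2 := (phi_one_hasDerivAt one_pos ((Real.sqrt t)⁻¹ * y)).comp t h1
  have h3 : (fun s => PhiIter s 1 y) =ᶠ[𝓝 t]
      ((fun z => PhiIter 1 1 z) ∘ fun s => (Real.sqrt s)⁻¹ * y) := by
    filter_upwards [eventually_gt_nhds ht] with s hs
    exact phi_one_scale hs y
  refine (h2.congr_of_eventuallyEq h3).congr_deriv ?_
  rw [gauss_scale ht y, Real.sq_sqrt ht.le]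
  field_simp

abbrev halfSp : Set (ℝ × ℝ) := {p : ℝ × ℝ | 0 < p.1}

lemma phi_one_contDiffOn :
    ContDiffOn ℝ (⊤ : ℕ∞) (fun p : ℝ × ℝ => PhiIter p.1 1 p.2) halfSp := by
  have : ContDiffOn ℝ (⊤ : ℕ∞) (fun p : ℝ × ℝ => PhiIter 1 1 ((Real.sqrt p.1)⁻¹ * p.2)) halfSp := by
    intro p hp
    have hp' : 0 < p.1 := hp
    apply ContDiffAt.contDiffWithinAt
    refine ContDiffAt.fun_comp p (g := fun z => PhiIter 1 1 z) phi_one_contDiff.contDiffAt ?_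
    exact ((contDiffAt_fst.sqrt hp'.ne').inv (Real.sqrt_pos.2 hp').ne').mul contDiffAt_snd
  exact this.congr fun p hp => phi_one_scale hp p.2

/-- two-sided induction -/
lemma int_two_step {Q : ℤ → Prop} (h0 : Q 0) (h1 : Q 1)
    (hup : ∀ m : ℤ, 1 ≤ m → Q (m - 1) → Q m → Q (m + 1))
    (hdn : ∀ m : ℤ, m ≤ 0 → Q (m + 1) → Q m → Q (m - 1)) (m : ℤ) : Q m := by
  have up : ∀ k : ℕ, Q k ∧ Q (k + 1) := by
    intro k
    induction k with
    | zero => exact ⟨by simpa using h0, by simpa using h1⟩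
    | succ k ih =>
      refine ⟨by simpa using ih.2, ?_⟩
      have := hup (k + 1) (by omega) (by simpa using ih.1) ih.2
      simpa using this
  have dn : ∀ k : ℕ, Q (-k) ∧ Q (-k + 1) := by
    intro k
    induction k with
    | zero => exact ⟨by simpa using h0, by simpa using h1⟩
    | succ k ih =>
      have e1 : -((k + 1 : ℕ) : ℤ) = -(k : ℤ) - 1 := by push_cast; ring
      rw [e1]
      refine ⟨hdn (-k) (by omega) ih.2 ih.1, by simpa using ih.1⟩
  rcases le_total 0 m with h | h
  · obtain ⟨k, rfl⟩ := Int.eq_ofNat_of_zero_le h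
    exact (up k).1
  · have := (dn (-m).toNat).1
    rwa [show -((-m).toNat : ℤ) = m by omega] at this

lemma phi_up {t : ℝ} (ht : 0 < t) (m : ℤ) (hm : 1 ≤ m) (y : ℝ) :
    PhiIter t (m + 1) y = (1 / (m : ℝ)) * (y * PhiIter t m y + t * PhiIter t (m - 1) y) := by
  rw [← phi_rec ht]
  have : (m : ℝ) ≠ 0 := by exact_mod_cast (by omega : m ≠ 0)
  field_simp

lemma phi_dn {t : ℝ} (ht : 0 < t) (m : ℤ) (y : ℝ) :
    PhiIter t (m - 1) y = t⁻¹ * ((m : ℝ) * PhiIter t (m + 1) y - y * PhiIter t m y) := by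
  rw [phi_rec ht]
  field_simp
  ring

lemma phi_contDiffOn (m : ℤ) :
    ContDiffOn ℝ (⊤ : ℕ∞) (fun p : ℝ × ℝ => PhiIter p.1 m p.2) halfSp := by
  refine int_two_step (Q := fun m => ContDiffOn ℝ (⊤ : ℕ∞)
    (fun p : ℝ × ℝ => PhiIter p.1 m p.2) halfSp) ?_ phi_one_contDiffOn ?_ ?_ m
  · simp only [phi_zero]; exact gauss_contDiffOn
  · intro m hm ha hb
    have : ContDiffOn ℝ (⊤ : ℕ∞) (fun p : ℝ × ℝ => (1 / (m : ℝ)) *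
        (p.2 * PhiIter p.1 m p.2 + p.1 * PhiIter p.1 (m - 1) p.2)) halfSp :=
      contDiffOn_const.mul ((contDiffOn_snd.mul hb).add (contDiffOn_fst.mul ha))
    exact this.congr fun p hp => phi_up hp m hm p.2
  · intro m hm ha hb
    have : ContDiffOn ℝ (⊤ : ℕ∞) (fun p : ℝ × ℝ => p.1⁻¹ *
        ((m : ℝ) * PhiIter p.1 (m + 1) p.2 - p.2 * PhiIter p.1 m p.2)) halfSp :=
      (contDiffOn_fst.inv fun p hp => (ne_of_gt hp)).mul
        ((contDiffOn_const.mul ha).sub (contDiffOn_snd.mul hb))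
    exact this.congr fun p hp => phi_dn hp m p.2

lemma phi_hasDerivAt {t : ℝ} (ht : 0 < t) (m : ℤ) : ∀ y : ℝ,
    HasDerivAt (fun z => PhiIter t m z) (PhiIter t (m - 1) y) y := by
  refine int_two_step (Q := fun m => ∀ y : ℝ,
    HasDerivAt (fun z => PhiIter t m z) (PhiIter t (m - 1) y) y) ?_ ?_ ?_ ?_ m
  · intro y; simpa using phi_neg_deriv t y 0
  · intro y; simpa [phi_zero] using phi_one_hasDerivAt ht y
  · intro m hm ha hb y
    have hm0 : (m : ℝ) ≠ 0 := by exact_mod_cast (by omega : m ≠ 0)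
    have h : HasDerivAt (fun z => (1 / (m : ℝ)) * (z * PhiIter t m z + t * PhiIter t (m - 1) z))
        ((1 / (m : ℝ)) * ((1 * PhiIter t m y + y * PhiIter t (m - 1) y)
          + t * PhiIter t (m - 1 - 1) y)) y :=
      (((hasDerivAt_id y).mul (hb y)).add ((ha y).const_mul t)).const_mul _
    simp_rw [phi_up ht m hm]
    refine h.congr_deriv ?_
    have r := phi_rec ht (m - 1) y
    rw [sub_add_cancel] at r
    push_cast at r
    rw [add_sub_cancel_right]
    field_simp
    linarith
  · intro m hm _ _ y
    have := phi_neg_deriv t y (-(m - 1)).toNat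
    rwa [show -((-(m - 1)).toNat : ℤ) = m - 1 by omega] at this

lemma phi_hasDerivAt_t {t : ℝ} (ht : 0 < t) (y : ℝ) (m : ℤ) :
    HasDerivAt (fun s => PhiIter s m y) (1 / 2 * PhiIter t (m - 2) y) t := by
  have r1 : ∀ m : ℤ, ((m : ℝ) - 1) * PhiIter t m y
      = y * PhiIter t (m - 1) y + t * PhiIter t (m - 2) y := by
    intro m
    have := phi_rec ht (m - 1) y
    rw [sub_add_cancel, sub_sub] at this
    push_cast at this
    exact this
  refine int_two_step (Q := fun m =>
    HasDerivAt (fun s => PhiIter s m y) (1 / 2 * PhiIter t (m - 2) y) t) ?_ ?_ ?_ ?_ m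
  · simp only [phi_zero]
    refine (gauss_hasDerivAt_t ht y).congr_deriv ?_
    have a := r1 0
    have b := r1 1
    norm_num [phi_zero] at a b ⊢
    have b' : PhiIter t (-1) y = - y * gauss t y / t := by field_simp; linarith
    rw [b'] at a
    have a' : PhiIter t (-2) y = (-gauss t y - y * (-y * gauss t y / t)) / t := by
      rw [eq_div_iff ht.ne']; linarith
    rw [a']
    field_simp
    ring
  · refine (phi_one_hasDerivAt_t ht y).congr_deriv ?_
    have b := r1 1
    norm_num [phi_zero] at b ⊢
    have b' : PhiIter t (-1) y = - y * gauss t y / t := by field_simp; linarith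
    rw [b']
    ring
  · intro m hm ha hb
    have hm0 : (m : ℝ) ≠ 0 := by exact_mod_cast (by omega : m ≠ 0)
    have h : HasDerivAt (fun s => (1 / (m : ℝ)) * (y * PhiIter s m y + s * PhiIter s (m - 1) y))
        ((1 / (m : ℝ)) * (y * (1 / 2 * PhiIter t (m - 2) y) +
          (1 * PhiIter t (m - 1) y + t * (1 / 2 * PhiIter t (m - 1 - 2) y)))) t :=
      ((hb.const_mul y).add ((hasDerivAt_id t).mul ha)).const_mul _
    have h3 : (fun s => PhiIter s (m + 1) y) =ᶠ[𝓝 t]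
        (fun s => (1 / (m : ℝ)) * (y * PhiIter s m y + s * PhiIter s (m - 1) y)) := by
      filter_upwards [eventually_gt_nhds ht] with s hs
      exact phi_up hs m hm y
    refine (h.congr_of_eventuallyEq h3).congr_deriv ?_
    have r := r1 (m - 1)
    rw [show m - 1 - 1 = m - 2 by ring] at r
    push_cast at r
    rw [show m + 1 - 2 = m - 1 by ring]
    field_simp
    linarith
  · intro m hm ha hb
    have h : HasDerivAt (fun s => s⁻¹ * ((m : ℝ) * PhiIter s (m + 1) y - y * PhiIter s m y))
        (-(t ^ 2)⁻¹ * ((m : ℝ) * PhiIter t (m + 1) y - y * PhiIter t m y) +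
          t⁻¹ * ((m : ℝ) * (1 / 2 * PhiIter t (m + 1 - 2) y) - y * (1 / 2 * PhiIter t (m - 2) y))) t :=
      (hasDerivAt_inv ht.ne').mul ((ha.const_mul (m : ℝ)).sub (hb.const_mul y))
    have h3 : (fun s => PhiIter s (m - 1) y) =ᶠ[𝓝 t]
        (fun s => s⁻¹ * ((m : ℝ) * PhiIter s (m + 1) y - y * PhiIter s m y)) := by
      filter_upwards [eventually_gt_nhds ht] with s hs
      exact phi_dn hs m y
    refine (h.congr_of_eventuallyEq h3).congr_deriv ?_
    have r := r1 (m - 1)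
    rw [show m - 1 - 1 = m - 2 by ring] at r
    push_cast at r
    rw [phi_rec ht, show m + 1 - 2 = m - 1 by ring]
    field_simp
    linear_combination t * r

lemma hasDerivAt_det {n : ℕ} (M : ℝ → Matrix (Fin n) (Fin n) ℝ) (M' : Matrix (Fin n) (Fin n) ℝ)
    (t : ℝ) (h : ∀ i j, HasDerivAt (fun s => M s i j) (M' i j) t) :
    HasDerivAt (fun s => (M s).det) (∑ i, ((M t).updateRow i (M' i)).det) t := by
  let f : ContinuousMultilinearMap ℝ (fun _ : Fin n => Fin n → ℝ) ℝ :=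
    { (Matrix.detRowAlternating (n := Fin n) (R := ℝ)).toMultilinearMap with
      cont := by
        change Continuous fun m : Fin n → Fin n → ℝ => Matrix.det (Matrix.of m)
        exact Continuous.matrix_det continuous_id }
  have hf := f.hasFDerivAt (x := fun i => M t i)
  have hM : HasDerivAt (fun s => (fun i => M s i : Fin n → Fin n → ℝ)) (fun i => M' i) t :=
    hasDerivAt_pi.2 fun i => hasDerivAt_pi.2 fun j => h i j
  have := hf.comp_hasDerivAt t hM
  rw [ContinuousMultilinearMap.linearDeriv_apply] at this
  exact this

lemma hasDerivAt_det_row {n : ℕ} (M : Matrix (Fin n) (Fin n) ℝ) (i : Fin n)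
    (v : ℝ → Fin n → ℝ) (v' : Fin n → ℝ)
    (t : ℝ) (h : ∀ j, HasDerivAt (fun s => v s j) (v' j) t) :
    HasDerivAt (fun s => (M.updateRow i (v s)).det) ((M.updateRow i v').det) t := by
  have e : ∀ w : Fin n → ℝ, (M.updateRow i w).det = ∑ j, M.adjugate j i * w j := by
    intro w
    rw [Matrix.det_eq_sum_mul_adjugate_row _ i]
    refine Finset.sum_congr rfl fun j _ => ?_
    rw [Matrix.updateRow_self, mul_comm, Matrix.adjugate_apply, Matrix.adjugate_apply,
      Matrix.updateRow_idem]
  simp_rw [e]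
  exact HasDerivAt.fun_sum fun j _ => (h j).const_mul _

/-- the matrix -/
noncomputable def kMat (n : ℕ) (t : ℝ) (x x' : Fin n → ℝ) : Matrix (Fin n) (Fin n) ℝ :=
  Matrix.of fun i j : Fin n => PhiIter t ((i : ℤ) - (j : ℤ)) (x' j - x i)

lemma rKer_update (n : ℕ) (t : ℝ) (x x' : Fin n → ℝ) (i : Fin n) (a : ℝ) :
    rKer n t (Function.update x i a) x' = ((kMat n t x x').updateRow i
      (fun j => PhiIter t ((i : ℤ) - (j : ℤ)) (x' j - a))).det := by
  unfold rKer kMat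
  congr 1
  ext k j
  by_cases hk : k = i
  · subst hk; simp
  · simp [hk]

lemma entry_hasDerivAt {t : ℝ} (ht : 0 < t) (m : ℤ) (c a : ℝ) :
    HasDerivAt (fun a => PhiIter t m (c - a)) (-PhiIter t (m - 1) (c - a)) a := by
  have h := (phi_hasDerivAt ht m (c - a)).comp a ((hasDerivAt_id a).const_sub c)
  exact h.congr_deriv (by simp)

lemma rKer_deriv (n : ℕ) {t : ℝ} (ht : 0 < t) (x x' : Fin n → ℝ) (i : Fin n) (a : ℝ) :
    HasDerivAt (fun a => rKer n t (Function.update x i a) x') ((kMat n t x x').updateRow i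
      (fun j => -PhiIter t ((i : ℤ) - (j : ℤ) - 1) (x' j - a))).det a := by
  simp_rw [rKer_update]
  exact hasDerivAt_det_row _ _ _ _ _ fun j => entry_hasDerivAt ht _ _ _

lemma rKer_deriv2 (n : ℕ) {t : ℝ} (ht : 0 < t) (x x' : Fin n → ℝ) (i : Fin n) (a : ℝ) :
    iteratedDeriv 2 (fun a => rKer n t (Function.update x i a) x') a = ((kMat n t x x').updateRow i
      (fun j => PhiIter t ((i : ℤ) - (j : ℤ) - 2) (x' j - a))).det := by
  rw [iteratedDeriv_succ, iteratedDeriv_one, funext fun a => (rKer_deriv n ht x x' i a).deriv]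
  refine (hasDerivAt_det_row _ _ _ _ _ fun j => ?_).deriv
  have := (entry_hasDerivAt ht ((i : ℤ) - (j : ℤ) - 1) (x' j) a).neg
  rw [neg_neg, sub_sub _ (1 : ℤ) 1] at this
  exact this

/-- For fixed `x'`, the map `(t,x) ↦ r_t(x,x')` is smooth on `(0,∞) × ℝ^n`, satisfies the
heat equation `(1/2) Σ_i ∂²r/∂x_i² = ∂r/∂t`, and its `i`-th partial derivative in `x`
vanishes wherever `x_i = x_{i−1}`. -/
theorem stmt12 (n : ℕ) (hn : 1 ≤ n) (x' : Fin n → ℝ) :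
    ContDiffOn ℝ (⊤ : ℕ∞)
      (fun p : ℝ × (Fin n → ℝ) => rKer n p.1 p.2 x') {p : ℝ × (Fin n → ℝ) | 0 < p.1} ∧
    (∀ (t : ℝ), 0 < t → ∀ x : Fin n → ℝ,
      (1 / 2 : ℝ) * ∑ i : Fin n,
          iteratedDeriv 2 (fun a => rKer n t (Function.update x i a) x') (x i)
        = deriv (fun s => rKer n s x x') t) ∧
    (∀ (t : ℝ), 0 < t → ∀ x : Fin n → ℝ, ∀ (i : ℕ) (hi : i < n) (hi1 : 1 ≤ i),
      x ⟨i, hi⟩ = x ⟨i - 1, by omega⟩ →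
      deriv (fun a => rKer n t (Function.update x ⟨i, hi⟩ a) x') (x ⟨i, hi⟩) = 0) := by
  refine ⟨?_, ?_, ?_⟩
  · have h : ∀ p : ℝ × (Fin n → ℝ), rKer n p.1 p.2 x' = ∑ σ : Equiv.Perm (Fin n),
        ((Equiv.Perm.sign σ : ℤ) : ℝ) *
          ∏ i, PhiIter p.1 (((σ i : Fin n) : ℤ) - (i : ℤ)) (x' i - p.2 (σ i)) := by
      intro p
      unfold rKer
      rw [Matrix.det_apply']
      rfl
    simp_rw [h]
    refine ContDiffOn.sum fun σ _ => contDiffOn_const.mul (contDiffOn_prod fun i _ => ?_)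
    refine (phi_contDiffOn (((σ i : Fin n) : ℤ) - (i : ℤ))).comp
      (f := fun p : ℝ × (Fin n → ℝ) => (p.1, x' i - p.2 (σ i))) ?_ (fun p hp => hp)
    apply ContDiff.contDiffOn
    fun_prop
  · intro t ht x
    simp_rw [rKer_deriv2 n ht]
    have h := hasDerivAt_det (fun s => kMat n s x x')
      (fun i j => 1 / 2 * PhiIter t ((i : ℤ) - (j : ℤ) - 2) (x' j - x i)) t
      (fun i j => phi_hasDerivAt_t ht _ _)
    have h' : deriv (fun s => rKer n s x x') t = _ := h.deriv
    rw [h', Finset.mul_sum]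
    refine Finset.sum_congr rfl fun i _ => ?_
    rw [← Matrix.det_updateRow_smul]
    rfl
  · intro t ht x i hi hi1 hx
    rw [(rKer_deriv n ht x x' ⟨i, hi⟩ _).deriv]
    have h1 : (fun j : Fin n => -PhiIter t (((⟨i, hi⟩ : Fin n) : ℤ) - (j : ℤ) - 1)
        (x' j - x ⟨i, hi⟩)) = (-1 : ℝ) • (kMat n t x x') ⟨i - 1, by omega⟩ := by
      funext j
      simp only [kMat, Pi.smul_apply, Matrix.of_apply, smul_eq_mul, neg_mul, one_mul, hx]
      congr 2
      push_cast [Nat.cast_sub hi1]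
      ring
    rw [h1, Matrix.det_updateRow_smul, Matrix.det_updateRow_eq_zero, mul_zero]
    intro h
    have := congrArg Fin.val h
    simp only at this
    omega
end
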